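/- arXiv:2404.07393 — 2 statements merged into one kernel-verified Lean document; each statement's English description precedes it below -/
import Mathlib

section
/- Let a ≥ 0 and b ≥ 2, and set λ = (2^a, 1^b) and μ = (2^{a+1}, 1^{b−2}), both partitions of 2a+b. Then μ covers λ in the standard immersion poset if and only if b(b−1)/2 > a. -/
open Finset MvPolynomial

/-- A partition of `n`, represented as a weakly decreasing list of positive
integers summing to `n`. -/
def IsPartitionOf (n : ℕ) (l : List ℕ) : Prop :=
  l.Pairwise (· ≥ ·) ∧ (∀ x ∈ l, 0 < x) ∧ l.sum = n

/-- `T : ℕ → ℕ → ℕ` is a semistandard Young tableau of shape `l`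
(rows weakly increase, columns strictly increase, entries are `0` outside
of the diagram; entries are 0-indexed, so entry value `k` stands for the
letter `k+1`). -/
def IsSSYT (l : List ℕ) (T : ℕ → ℕ → ℕ) : Prop :=
  (∀ i j1 j2, j1 ≤ j2 → j2 < l.getD i 0 → T i j1 ≤ T i j2) ∧
  (∀ i1 i2 j, i1 < i2 → j < l.getD i2 0 → T i1 j < T i2 j) ∧
  (∀ i j, l.getD i 0 ≤ j → T i j = 0)

/-- The tableau `T` of shape `l` has content `ν`: for every `k`, the number of
cells of the diagram of `l` whose entry is `k` equals the `(k+1)`-st part of `ν`. -/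
def HasContent (l : List ℕ) (T : ℕ → ℕ → ℕ) (ν : List ℕ) : Prop :=
  ∀ k, Nat.card {c : ℕ × ℕ // c.2 < l.getD c.1 0 ∧ T c.1 c.2 = k} = ν.getD k 0

/-- The Kostka number `K_{l,ν}`: the number of semistandard Young tableaux of
shape `l` and content `ν`. -/
noncomputable def kostka (l ν : List ℕ) : ℕ :=
  Nat.card {T : ℕ → ℕ → ℕ // IsSSYT l T ∧ HasContent l T ν}

/-- `f^λ`, the number of standard Young tableaux of shape `l`. -/
noncomputable def fSYT (l : List ℕ) : ℕ := kostka l (List.replicate l.sum 1)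

/-- Dominance order: all partial sums of `l` are at most those of `m`. -/
def DomLE (l m : List ℕ) : Prop := ∀ k, (l.take k).sum ≤ (m.take k).sum

/-- The standard immersion order: dominance together with `f^λ ≤ f^μ`. -/
def StdLE (l m : List ℕ) : Prop := DomLE l m ∧ fSYT l ≤ fSYT m

/-- Strict standard immersion order. -/
def StdLT (l m : List ℕ) : Prop := StdLE l m ∧ l ≠ m

/-- `m` covers `l` in the standard immersion poset on partitions of `n`. -/
def StdCovBy (n : ℕ) (l m : List ℕ) : Prop :=
  StdLT l m ∧ ∀ ν, IsPartitionOf n ν → StdLT l ν → ¬ StdLT ν m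

/-- `l` is a maximal element of the standard immersion poset on partitions of `n`. -/
def StdMaximal (n : ℕ) (l : List ℕ) : Prop :=
  ∀ m, IsPartitionOf n m → m ≠ l → ¬ StdLE l m

/-- The immersion order on partitions of `n`: `l ≤_I m` iff
`K_{l,α} ≤ K_{m,α}` for every partition `α` of `n`. -/
def ImmersionLE (n : ℕ) (l m : List ℕ) : Prop :=
  ∀ ν, IsPartitionOf n ν → kostka l ν ≤ kostka m ν

/-- Strict immersion order. -/
def ImmersionLT (n : ℕ) (l m : List ℕ) : Prop := ImmersionLE n l m ∧ l ≠ m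

/-- `m` covers `l` in the immersion poset on partitions of `n`. -/
def ImmersionCovBy (n : ℕ) (l m : List ℕ) : Prop :=
  ImmersionLT n l m ∧ ∀ ν, IsPartitionOf n ν → ImmersionLT n l ν → ¬ ImmersionLT n ν m

/-! The two-column partitions `(2^a, 1^b)` of a fixed `n` form a chain in dominance order, closed
under passing to dominated partitions, so `(2^{a+1}, 1^{b-2})` already covers `(2^a, 1^b)` there,
and only `f^λ ≤ f^μ` is at stake. A standard tableau is a linear extension of its diagram; removing
the largest entry, which sits in a corner, gives a recurrence for the number of tableaux, whose
solution is the hook length formula `f^(2^a, 1^b) = (b + 1) (2 a + b)! / ((a + b + 1)! a!)`. The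
ratio of two consecutive values is a quotient of quadratics, and comparing it with `1` gives
`a < b (b - 1) / 2`. -/

section LinearExtensions

variable {α : Type*} [Preorder α] {s : Finset α} {f : α → ℕ} {c : α}

/-- `f` is a linear extension of the finite set `s`: it numbers the elements of `s` by
`0, …, #s - 1` compatibly with the order. Requiring the value `0` off `s` makes `f` determined by
its restriction to `s`, so that linear extensions can be counted as functions on all of `α`. -/
structure IsLinearExtension (s : Finset α) (f : α → ℕ) : Prop where
  strictMonoOn : StrictMonoOn f s
  bijOn : Set.BijOn f s (Set.Iio #s)
  eq_zero : ∀ x ∉ s, f x = 0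

/-- The number of linear extensions of the finite set `s` in a preordered type. -/
noncomputable def numLinearExtensions (s : Finset α) : ℕ :=
  {f | IsLinearExtension s f}.ncard

lemma finite_isLinearExtension (s : Finset α) : {f | IsLinearExtension s f}.Finite := by
  refine Set.Finite.of_injOn (f := fun f (x : s) ↦ f x)
    (fun f hf ↦ Set.mem_univ_pi.2 fun x ↦ hf.bijOn.mapsTo x.2) (fun f hf g hg hfg ↦ ?_)
    (Set.Finite.pi fun _ : s ↦ Set.finite_Iio #s)
  funext x
  by_cases hx : x ∈ s
  · exact congrFun hfg ⟨x, hx⟩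
  · rw [hf.eq_zero x hx, hg.eq_zero x hx]

lemma numLinearExtensions_empty : numLinearExtensions (∅ : Finset α) = 1 := by
  refine Set.ncard_eq_one.2 ⟨0, Set.ext fun f ↦ ⟨fun hf ↦ funext fun x ↦ ?_, ?_⟩⟩
  · exact hf.eq_zero x (notMem_empty x)
  · rintro rfl
    exact ⟨by simp [StrictMonoOn], by simp, fun _ _ ↦ rfl⟩

lemma IsLinearExtension.maximal_of_add_one_eq (hf : IsLinearExtension s f) (hc : c ∈ s)
    (hfc : f c + 1 = #s) : Maximal (· ∈ s) c := by
  refine ⟨hc, fun x hx hcx ↦ ?_⟩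
  by_contra hxc
  have hlt : f c < f x := hf.strictMonoOn hc hx (lt_of_le_not_ge hcx hxc)
  have hx' : f x < #s := hf.bijOn.mapsTo hx
  omega

variable [DecidableEq α]

lemma isLinearExtension_insert_iff (hc : c ∉ s) (hmax : ∀ x ∈ s, ¬ c < x) (hfc : f c = #s) :
    IsLinearExtension (insert c s) f ↔ IsLinearExtension s (Function.update f c 0) := by
  have heq : Set.EqOn (Function.update f c 0) f s := fun x hx ↦
    Function.update_of_ne (ne_of_mem_of_not_mem (mem_coe.1 hx) hc) ..
  have hbij : Set.BijOn f (insert c s : Finset α) (Set.Iio #(insert c s)) ↔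
      Set.BijOn f s (Set.Iio #s) := by
    rw [coe_insert, card_insert_of_notMem hc, ← Order.succ_eq_add_one,
      Order.Iio_succ_eq_insert, ← hfc]
    exact Set.BijOn.insert_iff (mod_cast hc) (by simp)
  constructor
  · intro hf
    refine ⟨(hf.strictMonoOn.mono (mod_cast subset_insert c s)).congr heq.symm,
      (hbij.1 hf.bijOn).congr heq.symm, fun x hx ↦ ?_⟩
    obtain rfl | hxc := eq_or_ne x c
    · exact Function.update_self ..
    · rw [Function.update_of_ne hxc]
      exact hf.eq_zero x (by simp [hxc, hx])
  · intro hf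
    have hbij' := hf.bijOn.congr heq
    refine ⟨?_, hbij.2 hbij', fun x hx ↦ ?_⟩
    · rw [coe_insert, strictMonoOn_insert_iff]
      exact ⟨fun x hx _ ↦ hfc ▸ hbij'.mapsTo hx, fun x hx hlt ↦ (hmax x hx hlt).elim,
        hf.strictMonoOn.congr heq⟩
    · rw [mem_insert, not_or] at hx
      rw [← hf.eq_zero x hx.2, Function.update_of_ne hx.1]

lemma ncard_isLinearExtension_top_eq (hc : Maximal (· ∈ s) c) :
    {f | IsLinearExtension s f ∧ f c + 1 = #s}.ncard = numLinearExtensions (s.erase c) := by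
  obtain ⟨t, hct, rfl⟩ : ∃ t, c ∉ t ∧ insert c t = s :=
    ⟨s.erase c, notMem_erase c s, insert_erase hc.prop⟩
  have hmax : ∀ x ∈ t, ¬ c < x := fun x hx ↦ hc.not_gt (mem_insert_of_mem hx)
  rw [erase_insert hct, card_insert_of_notMem hct, numLinearExtensions]
  refine Set.BijOn.ncard_eq (f := fun f ↦ Function.update f c 0) ?_
  refine Set.InvOn.bijOn (f' := fun f ↦ Function.update f c #t) ⟨?_, ?_⟩ ?_ ?_
  · rintro f ⟨-, hfc⟩
    simp [← Nat.succ_injective hfc]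
  · intro g hg
    simp [← hg.eq_zero c hct]
  · rintro f ⟨hf, hfc⟩
    exact (isLinearExtension_insert_iff hct hmax (Nat.succ_injective hfc)).1 hf
  · intro g hg
    have hgc : Function.update g c #t c = #t := Function.update_self ..
    refine ⟨(isLinearExtension_insert_iff hct hmax hgc).2 ?_, congrArg (· + 1) hgc⟩
    simpa [← hg.eq_zero c hct] using hg

theorem numLinearExtensions_eq_sum_erase (hs : s.Nonempty) {C : Finset α}
    (hC : ∀ c, c ∈ C ↔ Maximal (· ∈ s) c) :
    numLinearExtensions s = ∑ c ∈ C, numLinearExtensions (s.erase c) := by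
  have hunion : {f | IsLinearExtension s f} =
      ⋃ c ∈ (C : Set α), {f | IsLinearExtension s f ∧ f c + 1 = #s} := by
    ext f
    simp only [Set.mem_iUnion, exists_prop, mem_coe]
    refine ⟨fun hf ↦ ?_, fun ⟨_, _, hf, _⟩ ↦ hf⟩
    obtain ⟨c, hcs, hfc⟩ := hf.bijOn.surjOn (Set.mem_Iio.2 (Nat.sub_one_lt_of_lt hs.card_pos))
    have hfc' : f c + 1 = #s := hfc ▸ Nat.sub_one_add_one hs.card_ne_zero
    exact ⟨c, (hC c).2 (hf.maximal_of_add_one_eq hcs hfc'), hf, hfc'⟩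
  have hdisj : (C : Set α).PairwiseDisjoint
      fun c ↦ {f | IsLinearExtension s f ∧ f c + 1 = #s} := by
    refine fun c hc d hd hcd ↦ Set.disjoint_left.2 fun f ⟨hf, hfc⟩ ⟨_, hfd⟩ ↦ hcd ?_
    exact hf.bijOn.injOn ((hC c).1 hc).prop ((hC d).1 hd).prop
      (Nat.succ_injective (hfc.trans hfd.symm))
  rw [numLinearExtensions, hunion, C.finite_toSet.ncard_biUnion
    (fun c _ ↦ (finite_isLinearExtension s).subset fun f hf ↦ hf.1) hdisj, finsum_mem_coe_finset]
  exact sum_congr rfl fun c hc ↦ ncard_isLinearExtension_top_eq ((hC c).1 hc)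

end LinearExtensions

lemma bijOn_iff_card_fiber_eq {α β : Type*} [DecidableEq β] {f : α → β} {s : Finset α}
    {t : Set β} [DecidablePred (· ∈ t)] :
    Set.BijOn f s t ↔ ∀ y, #{x ∈ s | f x = y} = if y ∈ t then 1 else 0 := by
  constructor
  · intro h y
    split_ifs with hy
    · obtain ⟨x, hx, hxy⟩ := h.surjOn hy
      refine card_eq_one.2 ⟨x, eq_singleton_iff_unique_mem.2
        ⟨mem_filter.2 ⟨hx, hxy⟩, fun z hz ↦ ?_⟩⟩
      exact h.injOn (mem_filter.1 hz).1 hx ((mem_filter.1 hz).2.trans hxy.symm)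
    · exact card_eq_zero.2 (filter_eq_empty_iff.2 fun x hx hxy ↦ hy (hxy ▸ h.mapsTo hx))
  · intro h
    have hunique {y : β} (hy : y ∈ t) := card_eq_one_iff_existsUnique.1 ((h y).trans (if_pos hy))
    have hmaps : Set.MapsTo f s t := by
      intro x hx
      by_contra hxt
      exact filter_eq_empty_iff.1 (card_eq_zero.1 ((h (f x)).trans (if_neg hxt))) hx rfl
    refine ⟨hmaps, fun x hx z hz hxz ↦ ?_, fun y hy ↦ ?_⟩
    · exact (hunique (hmaps hx)).unique (mem_filter.2 ⟨hx, rfl⟩) (mem_filter.2 ⟨hz, hxz.symm⟩)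
    · obtain ⟨x, hx, -⟩ := hunique hy
      exact ⟨x, mem_filter.1 hx⟩

section StandardTableaux

open YoungDiagram (cellsOfRowLens)

variable {l : List ℕ} {T : ℕ → ℕ → ℕ}

lemma mem_cellsOfRowLens_iff_lt_getD {c : ℕ × ℕ} :
    c ∈ cellsOfRowLens l ↔ c.2 < l.getD c.1 0 := by
  rw [YoungDiagram.mem_cellsOfRowLens]
  by_cases h : c.1 < l.length <;> simp [h]

lemma card_cellsOfRowLens (l : List ℕ) : #(cellsOfRowLens l) = l.sum := by
  induction l with
  | nil => rfl
  | cons w l ih =>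
    rw [YoungDiagram.cellsOfRowLens, card_union_of_disjoint, card_product, card_map, ih]
    · simp
    · simp [disjoint_left]

lemma hasContent_replicate_one_iff {n : ℕ} :
    HasContent l T (List.replicate n 1) ↔
      Set.BijOn (Function.uncurry T) (cellsOfRowLens l) (Set.Iio n) := by
  rw [bijOn_iff_card_fiber_eq]
  refine forall_congr' fun k ↦ ?_
  have hcard : Nat.card {c : ℕ × ℕ // c.2 < l.getD c.1 0 ∧ T c.1 c.2 = k} =
      #{c ∈ cellsOfRowLens l | Function.uncurry T c = k} :=
    Nat.subtype_card _ fun c ↦ by rw [mem_filter, mem_cellsOfRowLens_iff_lt_getD]; rfl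
  have hcontent : (List.replicate n 1).getD k 0 = if k ∈ Set.Iio n then 1 else 0 := by
    simp only [List.getD_eq_getElem?_getD, List.getElem?_replicate, Set.mem_Iio]
    split_ifs <;> rfl
  rw [hcard, hcontent]

lemma IsSSYT.monotoneOn (hl : l.SortedGE) (hT : IsSSYT l T) :
    MonotoneOn (Function.uncurry T) (cellsOfRowLens l) := by
  rintro ⟨i, j⟩ - ⟨i', j'⟩ hd ⟨hi : i ≤ i', hj : j ≤ j'⟩
  obtain ⟨hrow, hcol, -⟩ := hT
  have hcorner : (i, j') ∈ cellsOfRowLens l :=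
    (YoungDiagram.ofRowLens l hl).isLowerSet (Prod.mk_le_mk.2 ⟨hi, le_rfl⟩) hd
  rw [mem_coe, mem_cellsOfRowLens_iff_lt_getD] at hd
  rw [mem_cellsOfRowLens_iff_lt_getD] at hcorner
  calc T i j ≤ T i j' := hrow i j j' hj hcorner
    _ ≤ T i' j' := hi.eq_or_lt.elim (fun h ↦ h ▸ le_rfl) fun h ↦ (hcol i i' j' h hd).le

lemma isSSYT_of_strictMonoOn (hl : l.SortedGE)
    (hmono : StrictMonoOn (Function.uncurry T) (cellsOfRowLens l))
    (hzero : ∀ c ∉ cellsOfRowLens l, T c.1 c.2 = 0) : IsSSYT l T := by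
  have hlower {c d : ℕ × ℕ} (hcd : c ≤ d) (hd : d.2 < l.getD d.1 0) :
      c ∈ cellsOfRowLens l :=
    (YoungDiagram.ofRowLens l hl).isLowerSet hcd (mem_cellsOfRowLens_iff_lt_getD.2 hd)
  refine ⟨fun i j₁ j₂ hj h ↦ ?_, fun i₁ i₂ j hi h ↦ ?_, fun i j h ↦ ?_⟩
  · have hle : (i, j₁) ≤ (i, j₂) := Prod.mk_le_mk.2 ⟨le_rfl, hj⟩
    exact hmono.monotoneOn (hlower (d := (i, j₂)) hle h) (hlower le_rfl h) hle
  · have hlt : (i₁, j) < (i₂, j) := Prod.mk_lt_mk_iff_left.2 hi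
    exact hmono (hlower (d := (i₂, j)) hlt.le h) (hlower le_rfl h) hlt
  · exact hzero (i, j) (mem_cellsOfRowLens_iff_lt_getD.not.2 (not_lt.2 h))

lemma isSSYT_and_hasContent_iff (hl : l.SortedGE) :
    IsSSYT l T ∧ HasContent l T (List.replicate l.sum 1) ↔
      IsLinearExtension (cellsOfRowLens l) (Function.uncurry T) := by
  rw [hasContent_replicate_one_iff, ← card_cellsOfRowLens]
  constructor
  · rintro ⟨hT, hbij⟩
    refine ⟨(hT.monotoneOn hl).strictMonoOn_of_injOn hbij.injOn, hbij, fun c hc ↦ ?_⟩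
    exact hT.2.2 c.1 c.2 (not_lt.1 (mem_cellsOfRowLens_iff_lt_getD.not.1 hc))
  · rintro ⟨hmono, hbij, hzero⟩
    exact ⟨isSSYT_of_strictMonoOn hl hmono hzero, hbij⟩

theorem fSYT_eq_numLinearExtensions (hl : l.SortedGE) :
    fSYT l = numLinearExtensions (cellsOfRowLens l) := by
  rw [fSYT, kostka, numLinearExtensions, ← Nat.card_coe_set_eq]
  exact Nat.card_congr
    ((Equiv.curry ℕ ℕ ℕ).symm.subtypeEquiv fun _ ↦ isSSYT_and_hasContent_iff hl)

end StandardTableaux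

section TwoColumn

open YoungDiagram (cellsOfRowLens)

variable {a b p q : ℕ}

/-- The partition `(2^a, 1^b)`, whose Young diagram has columns of lengths `a + b` and `a`. -/
def twoColumn (a b : ℕ) : List ℕ := List.replicate a 2 ++ List.replicate b 1

lemma sortedGE_twoColumn (a b : ℕ) : (twoColumn a b).SortedGE := by
  refine List.Pairwise.sortedGE (List.pairwise_append.2 ⟨?_, ?_, fun x hx y hy ↦ ?_⟩)
  · exact List.pairwise_replicate.2 (.inr le_rfl)
  · exact List.pairwise_replicate.2 (.inr le_rfl)
  · rw [List.eq_of_mem_replicate hx, List.eq_of_mem_replicate hy]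
    exact one_le_two

lemma sum_twoColumn (a b : ℕ) : (twoColumn a b).sum = 2 * a + b := by
  simp [twoColumn, mul_comm]

lemma sum_take_twoColumn (a b k : ℕ) :
    ((twoColumn a b).take k).sum = 2 * min k a + min (k - a) b := by
  simp [twoColumn, List.take_append, mul_comm]

lemma mem_cellsOfRowLens_twoColumn {x : ℕ × ℕ} :
    x ∈ cellsOfRowLens (twoColumn a b) ↔
      x.2 = 0 ∧ x.1 < a + b ∨ x.2 = 1 ∧ x.1 < a := by
  have hrow : (twoColumn a b).getD x.1 0 = if x.1 < a then 2 else if x.1 < a + b then 1 else 0 := by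
    simp only [twoColumn, List.getD_eq_getElem?_getD, List.getElem?_append,
      List.getElem?_replicate, List.length_replicate]
    split_ifs <;> first | rfl | omega
  rw [mem_cellsOfRowLens_iff_lt_getD, hrow]
  split_ifs <;> omega

lemma maximal_mem_cellsOfRowLens_twoColumn_iff {x : ℕ × ℕ} :
    Maximal (· ∈ cellsOfRowLens (twoColumn a b)) x ↔
      x.2 = 0 ∧ x.1 + 1 = a + b ∧ 0 < b ∨ x.2 = 1 ∧ x.1 + 1 = a := by
  obtain ⟨i, j⟩ := x
  simp only [Maximal, mem_cellsOfRowLens_twoColumn, Prod.forall, Prod.mk_le_mk]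
  constructor
  · rintro ⟨hmem, hmax⟩
    have hdown := hmax (i + 1) j
    have hright := hmax i (j + 1)
    omega
  · intro h
    refine ⟨by omega, fun i' j' h' hle ↦ by omega⟩

lemma erase_cellsOfRowLens_twoColumn_fst (a b : ℕ) :
    (cellsOfRowLens (twoColumn a (b + 1))).erase (a + b, 0) =
      cellsOfRowLens (twoColumn a b) := by
  ext ⟨i, j⟩
  simp only [mem_erase, mem_cellsOfRowLens_twoColumn, ne_eq, Prod.mk.injEq]
  omega

lemma erase_cellsOfRowLens_twoColumn_snd (a b : ℕ) :
    (cellsOfRowLens (twoColumn (a + 1) b)).erase (a, 1) =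
      cellsOfRowLens (twoColumn a (b + 1)) := by
  ext ⟨i, j⟩
  simp only [mem_erase, mem_cellsOfRowLens_twoColumn, ne_eq, Prod.mk.injEq]
  omega

lemma fSYT_twoColumn_eq_sum_erase (h : 0 < a + b) {C : Finset (ℕ × ℕ)}
    (hC : ∀ x, x ∈ C ↔ x.2 = 0 ∧ x.1 + 1 = a + b ∧ 0 < b ∨ x.2 = 1 ∧ x.1 + 1 = a) :
    fSYT (twoColumn a b) =
      ∑ x ∈ C, numLinearExtensions ((cellsOfRowLens (twoColumn a b)).erase x) := by
  have hne : (cellsOfRowLens (twoColumn a b)).Nonempty :=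
    ⟨(0, 0), mem_cellsOfRowLens_twoColumn.2 (.inl ⟨rfl, h⟩)⟩
  rw [fSYT_eq_numLinearExtensions (sortedGE_twoColumn a b)]
  exact numLinearExtensions_eq_sum_erase hne fun x ↦
    (hC x).trans maximal_mem_cellsOfRowLens_twoColumn_iff.symm

lemma fSYT_twoColumn_zero_zero : fSYT (twoColumn 0 0) = 1 := by
  rw [fSYT_eq_numLinearExtensions (sortedGE_twoColumn 0 0)]
  exact numLinearExtensions_empty

lemma fSYT_twoColumn_zero_succ (b : ℕ) : fSYT (twoColumn 0 (b + 1)) = fSYT (twoColumn 0 b) := by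
  have hC (x : ℕ × ℕ) : x ∈ ({(0 + b, 0)} : Finset (ℕ × ℕ)) ↔
      x.2 = 0 ∧ x.1 + 1 = 0 + (b + 1) ∧ 0 < b + 1 ∨ x.2 = 1 ∧ x.1 + 1 = 0 := by
    rw [mem_singleton, Prod.ext_iff]
    omega
  rw [fSYT_twoColumn_eq_sum_erase (by omega) hC, sum_singleton,
    erase_cellsOfRowLens_twoColumn_fst, fSYT_eq_numLinearExtensions (sortedGE_twoColumn 0 b)]

lemma fSYT_twoColumn_succ_zero (a : ℕ) : fSYT (twoColumn (a + 1) 0) = fSYT (twoColumn a 1) := by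
  have hC (x : ℕ × ℕ) : x ∈ ({(a, 1)} : Finset (ℕ × ℕ)) ↔
      x.2 = 0 ∧ x.1 + 1 = a + 1 + 0 ∧ 0 < 0 ∨ x.2 = 1 ∧ x.1 + 1 = a + 1 := by
    rw [mem_singleton, Prod.ext_iff]
    omega
  rw [fSYT_twoColumn_eq_sum_erase (by omega) hC, sum_singleton,
    erase_cellsOfRowLens_twoColumn_snd, fSYT_eq_numLinearExtensions (sortedGE_twoColumn a 1)]

lemma fSYT_twoColumn_succ_succ (a b : ℕ) :
    fSYT (twoColumn (a + 1) (b + 1)) =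
      fSYT (twoColumn a (b + 2)) + fSYT (twoColumn (a + 1) b) := by
  have hC (x : ℕ × ℕ) : x ∈ ({(a, 1), (a + 1 + b, 0)} : Finset (ℕ × ℕ)) ↔
      x.2 = 0 ∧ x.1 + 1 = a + 1 + (b + 1) ∧ 0 < b + 1 ∨ x.2 = 1 ∧ x.1 + 1 = a + 1 := by
    rw [mem_insert, mem_singleton, Prod.ext_iff, Prod.ext_iff]
    omega
  rw [fSYT_twoColumn_eq_sum_erase (by omega) hC, sum_pair (by simp),
    erase_cellsOfRowLens_twoColumn_snd, erase_cellsOfRowLens_twoColumn_fst,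
    fSYT_eq_numLinearExtensions (sortedGE_twoColumn a (b + 2)),
    fSYT_eq_numLinearExtensions (sortedGE_twoColumn (a + 1) b)]

open Nat in
theorem fSYT_twoColumn_mul_factorial (a b : ℕ) :
    fSYT (twoColumn a b) * ((a + b + 1)! * a !) = (b + 1) * (2 * a + b)! := by
  induction a generalizing b with
  | zero =>
    induction b with
    | zero => rw [fSYT_twoColumn_zero_zero]; rfl
    | succ b ih =>
      rw [fSYT_twoColumn_zero_succ]
      simp only [mul_zero, zero_add, factorial_zero, mul_one] at ih ⊢
      rw [factorial_succ (b + 1), mul_left_comm, ih, factorial_succ]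
  | succ a iha =>
    induction b with
    | zero =>
      have h := iha 1
      rw [fSYT_twoColumn_succ_zero, add_zero, factorial_succ a, mul_add_one, add_zero,
        factorial_succ (2 * a + 1)]
      linear_combination (a + 1) * h
    | succ b ihb =>
      have h := iha (b + 2)
      rw [show a + (b + 2) + 1 = (a + b + 2) + 1 by ring, factorial_succ (a + b + 2),
        ← add_assoc] at h
      rw [show a + 1 + b + 1 = a + b + 2 by ring, show 2 * (a + 1) + b = 2 * a + b + 2 by ring,
        factorial_succ a] at ihb
      rw [fSYT_twoColumn_succ_succ, show a + 1 + (b + 1) + 1 = (a + b + 2) + 1 by ring,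
        show 2 * (a + 1) + (b + 1) = (2 * a + b + 2) + 1 by ring, factorial_succ a,
        factorial_succ (a + b + 2), factorial_succ (2 * a + b + 2)]
      linear_combination (a + 1) * h + (a + b + 3) * ihb

lemma fSYT_twoColumn_pos (a b : ℕ) : 0 < fSYT (twoColumn a b) := by
  refine Nat.pos_of_mul_pos_right (b := (a + b + 1).factorial * a.factorial) ?_
  rw [fSYT_twoColumn_mul_factorial]
  positivity

lemma fSYT_twoColumn_succ_mul (a b : ℕ) :
    fSYT (twoColumn (a + 1) b) * ((a + 1) * (b + 3)) =
      fSYT (twoColumn a (b + 2)) * ((b + 1) * (a + b + 3)) := by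
  have h := fSYT_twoColumn_mul_factorial a (b + 2)
  have h' := fSYT_twoColumn_mul_factorial (a + 1) b
  rw [← add_assoc a b 2, Nat.factorial_succ (a + b + 2)] at h
  rw [show a + 1 + b + 1 = a + b + 2 by ring, show 2 * (a + 1) + b = 2 * a + (b + 2) by ring,
    Nat.factorial_succ a] at h'
  have hpos : 0 < (a + b + 2).factorial * a.factorial := by positivity
  refine Nat.eq_of_mul_eq_mul_right hpos ?_
  linear_combination (b + 3) * h' - (b + 1) * h

theorem fSYT_twoColumn_le_iff (a b : ℕ) :
    fSYT (twoColumn a (b + 2)) ≤ fSYT (twoColumn (a + 1) b) ↔ a < (b + 2) * (b + 1) / 2 := by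
  calc fSYT (twoColumn a (b + 2)) ≤ fSYT (twoColumn (a + 1) b)
    _ ↔ fSYT (twoColumn a (b + 2)) * ((a + 1) * (b + 3)) ≤
          fSYT (twoColumn (a + 1) b) * ((a + 1) * (b + 3)) :=
        (Nat.mul_le_mul_right_iff (by positivity)).symm
    _ ↔ (a + 1) * (b + 3) ≤ (b + 1) * (a + b + 3) := by
        rw [fSYT_twoColumn_succ_mul, Nat.mul_le_mul_left_iff (fSYT_twoColumn_pos a (b + 2))]
    _ ↔ (a + 1) * 2 ≤ (b + 2) * (b + 1) := by constructor <;> intro h <;> linarith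
    _ ↔ a < (b + 2) * (b + 1) / 2 := by rw [← Nat.add_one_le_iff, Nat.le_div_iff_mul_le two_pos]

lemma domLE_twoColumn_iff (h : 2 * a + b = 2 * p + q) :
    DomLE (twoColumn a b) (twoColumn p q) ↔ a ≤ p := by
  simp only [DomLE, sum_take_twoColumn]
  refine ⟨fun hdom ↦ ?_, fun hap k ↦ by omega⟩
  have hk := hdom a
  omega

lemma eq_twoColumn_of_le_two {l : List ℕ} (hl : l.SortedGE) (hpos : ∀ x ∈ l, 0 < x)
    (hle : ∀ x ∈ l, x ≤ 2) : l = twoColumn (l.count 2) (l.count 1) := by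
  refine List.Perm.eq_of_sortedGE hl (sortedGE_twoColumn _ _) ?_
  refine (List.perm_replicate_append_replicate (by decide)).2 ⟨rfl, rfl, fun x hx ↦ ?_⟩
  have := hpos x hx
  have := hle x hx
  simp only [List.mem_cons, List.not_mem_nil, or_false]
  omega

lemma DomLE.le_two {l : List ℕ} (hl : l.SortedGE) (hdom : DomLE l (twoColumn a b)) :
    ∀ x ∈ l, x ≤ 2 := by
  have hfirst := hdom 1
  rw [sum_take_twoColumn] at hfirst
  cases l with
  | nil => simp
  | cons y l =>
    have hy : y ≤ 2 := by
      simp only [List.take_succ_cons, List.take_zero, List.sum_singleton] at hfirst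
      omega
    rintro x (_ | ⟨_, hx⟩)
    · exact hy
    · exact (List.rel_of_pairwise_cons hl.pairwise hx).trans hy

lemma eq_or_eq_of_domLE_twoColumn {l : List ℕ} (hl : IsPartitionOf (2 * a + (b + 2)) l)
    (hlower : DomLE (twoColumn a (b + 2)) l) (hupper : DomLE l (twoColumn (a + 1) b)) :
    l = twoColumn a (b + 2) ∨ l = twoColumn (a + 1) b := by
  obtain ⟨hsorted, hpos, hsum⟩ := hl
  obtain ⟨p, q, rfl⟩ : ∃ p q, l = twoColumn p q :=
    ⟨_, _, eq_twoColumn_of_le_two hsorted.sortedGE hpos (hupper.le_two hsorted.sortedGE)⟩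
  rw [sum_twoColumn] at hsum
  rw [domLE_twoColumn_iff (by omega)] at hlower hupper
  obtain rfl | rfl : p = a ∨ p = a + 1 := by omega
  · exact .inl (congrArg _ (by omega))
  · exact .inr (congrArg _ (by omega))

theorem stdCovBy_twoColumn_iff (a b : ℕ) :
    StdCovBy (2 * a + (b + 2)) (twoColumn a (b + 2)) (twoColumn (a + 1) b) ↔
      fSYT (twoColumn a (b + 2)) ≤ fSYT (twoColumn (a + 1) b) := by
  refine ⟨fun h ↦ h.1.1.2, fun h ↦ ⟨⟨⟨?_, h⟩, fun heq ↦ ?_⟩, fun ν hν hlower hupper ↦ ?_⟩⟩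
  · exact (domLE_twoColumn_iff (by omega)).2 a.le_succ
  · have hdom : DomLE (twoColumn (a + 1) b) (twoColumn a (b + 2)) := heq ▸ fun k ↦ le_rfl
    exact Nat.not_succ_le_self a ((domLE_twoColumn_iff (by omega)).1 hdom)
  · exact (eq_or_eq_of_domLE_twoColumn hν hlower.1.1 hupper.1.1).elim hlower.2.symm hupper.2

end TwoColumn

/-- `(2^{a+1},1^{b-2})` covers `(2^a,1^b)` in the standard immersion
poset on partitions of `2a+b` if and only if `b(b-1)/2 > a`. -/
theorem std_cover_two_column (a b : ℕ) (hb : 2 ≤ b) :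
    StdCovBy (2 * a + b) (List.replicate a 2 ++ List.replicate b 1)
      (List.replicate (a + 1) 2 ++ List.replicate (b - 2) 1) ↔ a < b * (b - 1) / 2 := by
  obtain ⟨b, rfl⟩ := Nat.exists_eq_add_of_le' hb
  exact (stdCovBy_twoColumn_iff a b).trans (fSYT_twoColumn_le_iff a b)
end

section
/- If λ is a maximal element in the standard immersion poset on partitions of n with at least two parts, then λ_1 > λ_2 (the first part of λ is strictly greater than the second part). -/
open Finset MvPolynomial

/-!
Number rows from `0` and suppose that `λ₀ = λ₁`. Let row `k` be the last row of length `λ₀` and move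
its last cell, a corner, to the end of row `0`. The resulting partition `μ` dominates `λ`, and every
tableau of shape `λ` remains semistandard when the entry of the moved cell travels along: the old
last entry of row `0` lies above the corner in the same column, hence is smaller. Therefore
`K_{λ,ν} ≤ K_{μ,ν}` for every content `ν`, in particular `f^λ ≤ f^μ`, and `λ` is not maximal.
-/

theorem lt_length_of_lt_getD {l : List ℕ} {i x : ℕ} (h : x < l.getD i 0) : i < l.length := by
  by_contra! hi
  rw [List.getD_eq_default _ _ hi] at h
  exact x.not_lt_zero h

theorem sum_take_eq_sum_range_getD {M : Type*} [AddCommMonoid M] (l : List M) (j : ℕ) :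
    (l.take j).sum = ∑ i ∈ range j, l.getD i 0 := by
  induction l generalizing j with
  | nil => simp
  | cons x t ih =>
    cases j with
    | zero => simp
    | succ j => simp [Finset.sum_range_succ', ih, add_comm]

theorem antitone_getD_of_pairwise {l : List ℕ} (hl : l.Pairwise (· ≥ ·)) :
    Antitone (l.getD · 0) := by
  intro i j hij
  obtain rfl | hij := hij.eq_or_lt
  · exact le_rfl
  obtain hj | hj := le_or_gt l.length j
  · exact (List.getD_eq_default l 0 hj).trans_le (Nat.zero_le _)
  · simpa only [List.getD_eq_getElem _ _ hj, List.getD_eq_getElem _ _ (hij.trans hj)] using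
      List.pairwise_iff_getElem.mp hl i j _ hj hij

theorem IsPartitionOf.antitone_getD {n : ℕ} {l : List ℕ} (hl : IsPartitionOf n l) :
    Antitone (l.getD · 0) :=
  antitone_getD_of_pairwise hl.1

theorem IsPartitionOf.getD_pos {n : ℕ} {l : List ℕ} (hl : IsPartitionOf n l) {i : ℕ}
    (hi : i < l.length) : 0 < l.getD i 0 :=
  (hl.2.1 _ (List.getElem_mem hi)).trans_eq (List.getD_eq_getElem _ _ hi).symm

theorem exists_isPartitionOf_getD_eq {f : ℕ → ℕ} (hf : Antitone f) (hf0 : ∃ i, f i = 0) :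
    ∃ l : List ℕ, IsPartitionOf l.sum l ∧ ∀ i, l.getD i 0 = f i := by
  refine ⟨(List.range (Nat.find hf0)).map f, ⟨?_, ?_, rfl⟩, fun i ↦ ?_⟩
  · exact List.pairwise_map.mpr (List.pairwise_lt_range.imp fun hij ↦ hf hij.le)
  · simp only [List.mem_map, List.mem_range]
    rintro _ ⟨i, hi, rfl⟩
    exact Nat.pos_of_ne_zero (Nat.find_min hf0 hi)
  · obtain hi | hi := lt_or_ge i (Nat.find hf0)
    · simp [List.getD, hi]
    · rw [List.getD_eq_default _ _ (by simpa using hi)]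
      exact (Nat.eq_zero_of_le_zero ((hf hi).trans_eq (Nat.find_spec hf0))).symm

theorem exists_pos_eq_apply_zero_succ_lt {α : Type*} [LinearOrder α] {f : ℕ → α}
    (hf : Antitone f) (h01 : f 1 = f 0) (hlt : ∃ i, f i < f 0) :
    ∃ k, 0 < k ∧ f k = f 0 ∧ f (k + 1) < f k := by
  obtain ⟨k, hk⟩ : ∃ k, Nat.find hlt = k + 1 :=
    Nat.exists_eq_succ_of_ne_zero fun h ↦ (Nat.find_eq_zero hlt).mp h |>.false
  have hfk : f k = f 0 := (hf k.zero_le).antisymm (not_lt.mp (Nat.find_min hlt (by omega)))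
  have hfk' : f (k + 1) < f 0 := hk ▸ Nat.find_spec hlt
  refine ⟨k, Nat.pos_of_ne_zero ?_, hfk, hfk ▸ hfk'⟩
  rintro rfl
  exact hfk'.ne h01

/-- The cells of the diagram of `l`, with rows and columns indexed from `0` as in `IsSSYT`. -/
def cells (l : List ℕ) : Set (ℕ × ℕ) := {c | c.2 < l.getD c.1 0}

theorem mem_cells {l : List ℕ} {c : ℕ × ℕ} : c ∈ cells l ↔ c.2 < l.getD c.1 0 := Iff.rfl

theorem finite_cells (l : List ℕ) : (cells l).Finite := by
  refine ((Set.finite_Iio l.length).biUnion fun i _ ↦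
    (Set.finite_Iio (l.getD i 0)).image (Prod.mk i)).subset fun c hc ↦ ?_
  exact Set.mem_biUnion (Set.mem_Iio.mpr (lt_length_of_lt_getD hc)) ⟨c.2, hc, rfl⟩

theorem HasContent.lt_length {l ν : List ℕ} {T : ℕ → ℕ → ℕ} (hT : HasContent l T ν)
    {c : ℕ × ℕ} (hc : c ∈ cells l) : T c.1 c.2 < ν.length := by
  have : Finite {d : ℕ × ℕ // d.2 < l.getD d.1 0 ∧ T d.1 d.2 = T c.1 c.2} :=
    (finite_cells l).subset fun _ hd ↦ hd.1
  have : Nonempty {d : ℕ × ℕ // d.2 < l.getD d.1 0 ∧ T d.1 d.2 = T c.1 c.2} := ⟨⟨c, hc, rfl⟩⟩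
  exact lt_length_of_lt_getD (Nat.card_pos.trans_eq (hT (T c.1 c.2)))

instance finite_ssyt (l ν : List ℕ) :
    Finite {T : ℕ → ℕ → ℕ // IsSSYT l T ∧ HasContent l T ν} := by
  have : Finite (cells l) := finite_cells l
  refine Finite.of_injective
    (fun T (c : cells l) ↦ (⟨_, T.2.2.lt_length c.2⟩ : Fin ν.length)) fun T T' h ↦ ?_
  ext i j
  by_cases hij : j < l.getD i 0
  · exact congrArg Fin.val (congrFun h ⟨(i, j), hij⟩)
  · rw [T.2.1.2.2 i j (not_lt.mp hij), T'.2.1.2.2 i j (not_lt.mp hij)]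

/-- The filling obtained from `T` by permuting cells: cell `c` receives the entry of `T` at `σ c`.
It is used to transport tableaux between shapes. -/
def permuteCells (σ : Equiv.Perm (ℕ × ℕ)) (T : ℕ → ℕ → ℕ) : ℕ → ℕ → ℕ :=
  fun i j ↦ T (σ (i, j)).1 (σ (i, j)).2

theorem permuteCells_injective (σ : Equiv.Perm (ℕ × ℕ)) : Function.Injective (permuteCells σ) := by
  intro T T' h
  ext i j
  simpa [permuteCells] using congrFun₂ h (σ.symm (i, j)).1 (σ.symm (i, j)).2

theorem HasContent.permuteCells {l m ν : List ℕ} {σ : Equiv.Perm (ℕ × ℕ)} {T : ℕ → ℕ → ℕ}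
    (hσ : ∀ c, c ∈ cells m ↔ σ c ∈ cells l) (hT : HasContent l T ν) :
    HasContent m (permuteCells σ T) ν := fun x ↦
  (Nat.card_congr (σ.subtypeEquiv fun c ↦ and_congr_left' (hσ c))).trans (hT x)

theorem kostka_le_kostka_of_perm {l m : List ℕ} (σ : Equiv.Perm (ℕ × ℕ))
    (hσ : ∀ c, c ∈ cells m ↔ σ c ∈ cells l)
    (hssyt : ∀ T, IsSSYT l T → IsSSYT m (permuteCells σ T)) (ν : List ℕ) :
    kostka l ν ≤ kostka m ν :=
  Nat.card_le_card_of_injective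
    (Subtype.map (permuteCells σ) fun T hT ↦ ⟨hssyt T hT.1, hT.2.permuteCells hσ⟩)
    (Subtype.map_injective _ (permuteCells_injective σ))

/-- `m` arises from `l` by moving the last cell of row `k` to the end of row `i` (the raising
operator `R_{ik}`); with `i = 0` and rows of equal length it is the step up in the standard
immersion order. One cell is added on each side of the equation so that no subtraction occurs. -/
def IsRaise (i k : ℕ) (l m : List ℕ) : Prop :=
  ∀ r, m.getD r 0 + (if r = k then 1 else 0) = l.getD r 0 + if r = i then 1 else 0

/-- The transposition of cells that transports fillings along `IsRaise i k l m`: it exchanges the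
new cell at the end of row `i` of `m` with the cell removed from row `k` of `l`. -/
def raiseSwap (i k : ℕ) (l m : List ℕ) : Equiv.Perm (ℕ × ℕ) :=
  Equiv.swap (i, l.getD i 0) (k, m.getD k 0)

namespace IsRaise

variable {i k : ℕ} {l m : List ℕ}

theorem getD_target (h : IsRaise i k l m) (hik : i ≠ k) : m.getD i 0 = l.getD i 0 + 1 := by
  simpa [hik] using h i

theorem getD_source (h : IsRaise i k l m) (hik : i ≠ k) : m.getD k 0 + 1 = l.getD k 0 := by
  simpa [hik.symm] using h k

theorem ne (h : IsRaise i k l m) (hik : i ≠ k) : m ≠ l := by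
  rintro rfl
  exact absurd (h.getD_target hik) (by simp)

theorem sum_take (h : IsRaise i k l m) (j : ℕ) :
    (m.take j).sum + (if k < j then 1 else 0) = (l.take j).sum + if i < j then 1 else 0 := by
  have hsum := Finset.sum_congr (rfl : range j = range j) fun r _ ↦ h r
  simpa only [Finset.sum_add_distrib, Finset.sum_ite_eq', Finset.mem_range,
    ← sum_take_eq_sum_range_getD] using hsum

theorem sum_eq (h : IsRaise i k l m) : m.sum = l.sum := by
  have htake := h.sum_take (l.length + m.length + i + k + 1)
  rw [List.take_of_length_le (by omega), List.take_of_length_le (by omega),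
    if_pos (by omega), if_pos (by omega)] at htake
  exact Nat.add_right_cancel htake

theorem domLE (h : IsRaise i k l m) (hik : i ≤ k) : DomLE l m := by
  intro j
  have htake := h.sum_take j
  split_ifs at htake <;> omega

theorem mem_cells_iff (h : IsRaise i k l m) (hik : i ≠ k) (c : ℕ × ℕ) :
    c ∈ cells m ↔ raiseSwap i k l m c ∈ cells l := by
  have hi := h.getD_target hik
  have hk := h.getD_source hik
  by_cases hnew : c = (i, l.getD i 0)
  · simp only [hnew, raiseSwap, Equiv.swap_apply_left, mem_cells]
    omega
  by_cases hold : c = (k, m.getD k 0)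
  · simp only [hold, raiseSwap, Equiv.swap_apply_right, mem_cells, lt_irrefl]
  · rw [raiseSwap, Equiv.swap_apply_of_ne_of_ne hnew hold]
    have hc := h c.1
    simp only [mem_cells]
    grind

theorem lt_getD_of_lt_getD (h : IsRaise i k l m) {r j : ℕ} (hj : j < m.getD r 0)
    (hne : ¬(r = i ∧ j = l.getD i 0)) : j < l.getD r 0 := by
  have hr := h r
  grind

theorem permuteCells_raiseSwap_new (i k : ℕ) (l m : List ℕ) (T : ℕ → ℕ → ℕ) :
    permuteCells (raiseSwap i k l m) T i (l.getD i 0) = T k (m.getD k 0) := by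
  rw [permuteCells, raiseSwap, Equiv.swap_apply_left]

theorem permuteCells_raiseSwap_of_ne (T : ℕ → ℕ → ℕ) {r j : ℕ} (hj : j < m.getD r 0)
    (hne : ¬(r = i ∧ j = l.getD i 0)) : permuteCells (raiseSwap i k l m) T r j = T r j := by
  have hold : (r, j) ≠ (k, m.getD k 0) := by
    rintro ⟨⟩
    exact hj.false
  rw [permuteCells, raiseSwap, Equiv.swap_apply_of_ne_of_ne (mt Prod.mk.inj hne) hold]

theorem isSSYT_permuteCells (h : IsRaise 0 k l m) (hk : 0 < k) (hl : Antitone (l.getD · 0))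
    (hm : Antitone (m.getD · 0)) (hlk : l.getD k 0 = l.getD 0 0) {T : ℕ → ℕ → ℕ}
    (hT : IsSSYT l T) : IsSSYT m (permuteCells (raiseSwap 0 k l m) T) := by
  obtain ⟨hrow, hcol, hzero⟩ := hT
  have hm0 : m.getD 0 0 = l.getD 0 0 + 1 := h.getD_target hk.ne
  have hmk : m.getD k 0 + 1 = l.getD k 0 := h.getD_source hk.ne
  refine ⟨fun r j₁ j₂ hj hj₂ ↦ ?_, fun r₁ r₂ j hr hj ↦ ?_, fun r j hj ↦ ?_⟩
  · obtain rfl | hlt := hj.eq_or_lt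
    · exact le_rfl
    have hne₁ : ¬(r = 0 ∧ j₁ = l.getD 0 0) := by
      rintro ⟨rfl, rfl⟩
      omega
    rw [permuteCells_raiseSwap_of_ne T (hj.trans_lt hj₂) hne₁]
    by_cases hnew : r = 0 ∧ j₂ = l.getD 0 0
    · obtain ⟨rfl, rfl⟩ := hnew
      rw [permuteCells_raiseSwap_new]
      calc T 0 j₁ ≤ T 0 (m.getD k 0) := hrow _ _ _ (by omega) (by omega)
        _ ≤ T k (m.getD k 0) := (hcol _ _ _ hk (by omega)).le
    · rw [permuteCells_raiseSwap_of_ne T hj₂ hnew]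
      exact hrow _ _ _ hj (h.lt_getD_of_lt_getD hj₂ hnew)
  · have hj' : j < l.getD r₂ 0 := h.lt_getD_of_lt_getD hj (by omega)
    have hj₀ : j < l.getD 0 0 := hj'.trans_le (hl r₂.zero_le)
    have hj₁ : j < m.getD r₁ 0 := hj.trans_le (hm hr.le)
    rw [permuteCells_raiseSwap_of_ne T hj (by omega),
      permuteCells_raiseSwap_of_ne T hj₁ (by omega)]
    exact hcol _ _ _ hr hj'
  · exact hzero _ _ (not_lt.mp fun hlt ↦ hj.not_gt ((h.mem_cells_iff hk.ne (r, j)).mpr hlt))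

theorem kostka_le (h : IsRaise 0 k l m) (hk : 0 < k) (hl : Antitone (l.getD · 0))
    (hm : Antitone (m.getD · 0)) (hlk : l.getD k 0 = l.getD 0 0) (ν : List ℕ) :
    kostka l ν ≤ kostka m ν :=
  kostka_le_kostka_of_perm (raiseSwap 0 k l m) (h.mem_cells_iff hk.ne)
    (fun _ ↦ h.isSSYT_permuteCells hk hl hm hlk) ν

end IsRaise

theorem IsPartitionOf.exists_isRaise_of_corner {n k : ℕ} {l : List ℕ} (hl : IsPartitionOf n l)
    (hk : l.getD (k + 1) 0 < l.getD k 0) : ∃ m, IsPartitionOf n m ∧ IsRaise 0 k l m := by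
  let f (r : ℕ) : ℕ := l.getD r 0 + (if r = 0 then 1 else 0) - if r = k then 1 else 0
  have hf : Antitone f := antitone_nat_of_succ_le fun r ↦ by
    have hr : l.getD (r + 1) 0 ≤ l.getD r 0 := hl.antitone_getD r.le_succ
    grind
  have hf0 : f (l.length + 1) = 0 := by
    simp [f]
  obtain ⟨m, hm, hmf⟩ := exists_isPartitionOf_getD_eq hf ⟨_, hf0⟩
  have h : IsRaise 0 k l m := fun r ↦ by
    rw [hmf]
    grind
  exact ⟨m, by rwa [h.sum_eq, hl.2.2] at hm, h⟩

theorem IsPartitionOf.exists_domLE_kostka_le {n : ℕ} {l : List ℕ} (hl : IsPartitionOf n l)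
    (hpos : 0 < l.getD 0 0) (h01 : l.getD 1 0 = l.getD 0 0) :
    ∃ m, IsPartitionOf n m ∧ m ≠ l ∧ DomLE l m ∧ ∀ ν, kostka l ν ≤ kostka m ν := by
  have hlt : ∃ i, l.getD i 0 < l.getD 0 0 :=
    ⟨l.length, (List.getD_eq_default l 0 le_rfl).trans_lt hpos⟩
  obtain ⟨k, hk, hk0, hcorner⟩ := exists_pos_eq_apply_zero_succ_lt hl.antitone_getD h01 hlt
  obtain ⟨m, hm, h⟩ := hl.exists_isRaise_of_corner hcorner
  exact ⟨m, hm, h.ne hk.ne, h.domLE hk.le,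
    h.kostka_le hk hl.antitone_getD hm.antitone_getD hk0⟩

/-- A maximal element of the standard immersion poset on partitions
of `n` with at least two parts has strictly larger first part than second part. -/
theorem std_maximal_first_part_strict (n : ℕ) (l : List ℕ) (hl : IsPartitionOf n l)
    (hlen : 2 ≤ l.length) (hmax : StdMaximal n l) :
    l.getD 1 0 < l.getD 0 0 := by
  by_contra hge
  have h01 : l.getD 1 0 = l.getD 0 0 :=
    (hl.antitone_getD (Nat.zero_le 1)).antisymm (not_lt.mp hge)
  obtain ⟨m, hm, hne, hdom, hkostka⟩ :=
    hl.exists_domLE_kostka_le (hl.getD_pos (Nat.zero_lt_of_lt hlen)) h01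
  have hf : fSYT l ≤ fSYT m := by
    rw [fSYT, fSYT, hm.2.2, hl.2.2]
    exact hkostka _
  exact hmax m hm hne ⟨hdom, hf⟩
end
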